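/- Let ρ ≥ 3 be an integer. Let G be a group containing elements t_0, t_1, …, t_{2ρ+1} such that: (i) t_i t_j = t_j t_i for all 1 ≤ i, j ≤ 2ρ+1 with |i−j| ≥ 2; (ii) t_i t_{i+1} t_i = t_{i+1} t_i t_{i+1} for all 1 ≤ i ≤ 2ρ; (iii) t_0 t_i = t_i t_0 for all 1 ≤ i ≤ 2ρ+1 with i ≠ 4; (iv) t_0 t_4 t_0 = t_4 t_0 t_4; (v) G is generated by t_0, t_1, …, t_{2ρ}; (vi) G is perfect, i.e. G equals its commutator subgroup. Then G has no proper subgroup of index ≤ 4ρ+4; that is, every subgroup H of G with finite index at most 4ρ+4 equals G. -/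

import Mathlib

/-!
The generators are conjugate and `G` is perfect, so it suffices that they all act in the same way
on every small finite `G`-set. Call the union of the orbits of a subfamily on which its members
act differently its nonuniform locus. Elements commuting with the subfamily permute the orbits in
this locus and can move points inside such an orbit only if it is large; in a small set they
therefore fix the locus pointwise. Adding two curves to the surface thus yields a generator of
small support, and two commuting generators have disjoint supports. Braid moves then carry these
supports to the three neighbours of the vertex `4`, which is impossible for counting reasons since
a braid relation makes any two adjacent supports overlap in at least half of their points. The case
of genus three starts from pairs of adjacent generators, whose three disjoint nonuniform loci of
equal size share at most sixteen points.
-/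

section

open MulAction Subgroup
open scoped Pointwise

universe u v

variable {G : Type v} [Group G] {Ω : Type u} [MulAction G Ω]

section Orbits

variable {K : Subgroup G} {S : Set Ω} {p : Ω} {x y : G}

lemma smul_smul_comm_of_commute (h : Commute x y) (p : Ω) : x • y • p = y • x • p := by
  rw [smul_smul, smul_smul, h.eq]

lemma orbit_subset_of_le_stabilizer (hS : K ≤ stabilizer G S) (hp : p ∈ S) : orbit K p ⊆ S := by
  rintro _ ⟨k, rfl⟩
  exact (mem_stabilizer_set.1 (hS k.2) p).2 hp

lemma le_stabilizer_orbit (K : Subgroup G) (p : Ω) : K ≤ stabilizer G (orbit K p) :=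
  fun k hk => smul_orbit (⟨k, hk⟩ : K) p

lemma smul_orbit_eq_orbit_conj_smul (g : G) (K : Subgroup G) (p : Ω) :
    g • orbit K p = orbit (MulAut.conj g • K : Subgroup G) (g • p) := by
  ext q
  constructor
  · rintro ⟨_, ⟨k, rfl⟩, rfl⟩
    refine ⟨⟨_, smul_mem_pointwise_smul _ _ _ k.2⟩, ?_⟩
    simp [Subgroup.smul_def, mul_smul]
  · rintro ⟨⟨_, k, hk, rfl⟩, rfl⟩
    exact ⟨_, ⟨⟨k, hk⟩, rfl⟩, by simp [Subgroup.smul_def, mul_smul]⟩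

lemma smul_orbit_of_mem_centralizer (hy : y ∈ centralizer (K : Set G)) (p : Ω) :
    y • orbit K p = orbit K (y • p) := by
  simp only [orbit, ← Set.range_smul, Subgroup.smul_def]
  exact congrArg Set.range
    (funext fun k => smul_smul_comm_of_commute (mem_centralizer_iff.1 hy k k.2).symm p)

lemma mul_ncard_image_orbit_le [Finite Ω] (hS : K ≤ stabilizer G S) {k : ℕ}
    (hk : ∀ p ∈ S, k ≤ (orbit K p).ncard) :
    k * ((fun p : Ω => orbit K p) '' S).ncard ≤ S.ncard := by
  classical
  have := Fintype.ofFinite Ω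
  rw [Set.ncard_eq_toFinset_card', Set.ncard_eq_toFinset_card', Set.toFinset_image]
  refine Finset.mul_card_image_le_card _ k fun B hB => ?_
  obtain ⟨p, hp, rfl⟩ := Finset.mem_image.1 hB
  rw [Set.mem_toFinset] at hp
  refine (hk p hp).trans (Set.ncard_le_ncard (t := _) ?_ |>.trans_eq (Set.ncard_coe_finset _))
  intro q hq
  simpa using ⟨orbit_subset_of_le_stabilizer hS hp hq, orbit_eq_iff.2 hq⟩

lemma stabilizer_inf_centralizer_le_stabilizer_image_orbit (K : Subgroup G) (S : Set Ω) :
    stabilizer G S ⊓ centralizer (K : Set G) ≤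
      stabilizer G ((fun p : Ω => orbit K p) '' S) := by
  rintro y ⟨hyS, hyK⟩
  rw [mem_stabilizer_iff, ← Set.image_smul, Set.image_image]
  conv_rhs => rw [← show y • S = S from hyS, ← Set.image_smul, Set.image_image]
  exact Set.image_congr fun p _ => smul_orbit_of_mem_centralizer hyK p

lemma mem_stabilizer_orbit_or_two_mul_ncard_le [Finite Ω] (hS : K ≤ stabilizer G S)
    (hyK : y ∈ centralizer (K : Set G)) (hyS : y ∈ stabilizer G S) (hp : p ∈ S) :
    y ∈ stabilizer G (orbit K p) ∨ 2 * (orbit K p).ncard ≤ S.ncard := by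
  rw [mem_stabilizer_iff, smul_orbit_of_mem_centralizer hyK]
  refine (orbit.eq_or_disjoint (y • p) p).imp_right fun hdisj => ?_
  have hy : (orbit K (y • p)).ncard = (orbit K p).ncard := by
    rw [← smul_orbit_of_mem_centralizer hyK, Set.ncard_smul_set]
  rw [two_mul]
  nth_rw 1 [← hy]
  rw [← Set.ncard_union_eq hdisj]
  exact Set.ncard_le_ncard (Set.union_subset
    (orbit_subset_of_le_stabilizer hS ((mem_stabilizer_set.1 hyS p).2 hp))
    (orbit_subset_of_le_stabilizer hS hp))

lemma smul_smul_comm_of_mem_orbit_zpowers {e f : G} (he : Commute e x) (hf : Commute f x)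
    (hep : e • p ∈ orbit (zpowers x) p) (hfp : f • p ∈ orbit (zpowers x) p) :
    e • f • p = f • e • p := by
  obtain ⟨⟨_, k, rfl⟩, hk : x ^ k • p = e • p⟩ := hep
  obtain ⟨⟨_, l, rfl⟩, hl : x ^ l • p = f • p⟩ := hfp
  rw [← hk, ← hl, smul_smul_comm_of_commute (he.zpow_right l), ← hk,
    smul_smul_comm_of_commute (hf.zpow_right k), ← hl,
    smul_smul_comm_of_commute (Commute.zpow_zpow_self x l k)]

end Orbits

section Uniformity

/-- The elements of `T` all act on the points of `S` in the same way. -/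
def ActsUniformlyOn (T : Set G) (S : Set Ω) : Prop :=
  ∀ a ∈ T, ∀ b ∈ T, Set.EqOn (a • · : Ω → Ω) (b • ·) S

variable (Ω) in
/-- The union of the orbits of the group generated by `T` on which `T` does not act uniformly. -/
def nonuniformLocus (T : Set G) : Set Ω :=
  {p | ¬ ActsUniformlyOn T (orbit (closure T) p)}

variable {T T' : Set G} {S : Set Ω} {p : Ω} {a b y : G}

lemma ActsUniformlyOn.mono_right {S' : Set Ω} (h : ActsUniformlyOn T S) (hS : S' ⊆ S) :
    ActsUniformlyOn T S' :=
  fun a ha b hb => (h a ha b hb).mono hS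

lemma actsUniformlyOn_pair : ActsUniformlyOn {a, b} S ↔ Set.EqOn (a • · : Ω → Ω) (b • ·) S := by
  refine ⟨fun h => h a (by simp) b (by simp), fun h => ?_⟩
  rintro _ (rfl | rfl) _ (rfl | rfl)
  exacts [Set.eqOn_refl _ _, h, h.symm, Set.eqOn_refl _ _]

lemma actsUniformlyOn_smul (g : G) :
    ActsUniformlyOn (MulAut.conj g • T) (g • S) ↔ ActsUniformlyOn T S := by
  simp only [ActsUniformlyOn, Set.EqOn, ← Set.image_smul, Set.forall_mem_image, MulAut.smul_def,
    MulAut.conj_apply, mul_smul, inv_smul_smul, smul_left_cancel_iff]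

lemma smul_nonuniformLocus (g : G) (T : Set G) :
    g • nonuniformLocus Ω T = nonuniformLocus Ω (MulAut.conj g • T) := by
  ext p
  rw [Set.mem_smul_set_iff_inv_smul_mem]
  simp only [nonuniformLocus, Set.mem_ofPred_eq]
  rw [← actsUniformlyOn_smul g, smul_orbit_eq_orbit_conj_smul, smul_inv_smul, smul_closure]

lemma centralizer_le_stabilizer_nonuniformLocus (T : Set G) :
    centralizer T ≤ stabilizer G (nonuniformLocus Ω T) := by
  intro y hy
  rw [mem_stabilizer_iff, smul_nonuniformLocus]
  congr 1
  refine (Set.image_congr fun a ha => ?_).trans (Set.image_id T)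
  simp only [MulAut.smul_def, MulAut.conj_apply, id_eq, ← hy a ha, mul_inv_cancel_right]

lemma closure_le_stabilizer_nonuniformLocus (T : Set G) :
    closure T ≤ stabilizer G (nonuniformLocus Ω T) := by
  intro g hg
  refine mem_stabilizer_set.2 fun p => ?_
  rw [nonuniformLocus, Set.mem_ofPred_eq, Set.mem_ofPred_eq,
    show orbit (closure T) (g • p) = orbit (closure T) p from orbit_eq_iff.2 ⟨⟨g, hg⟩, rfl⟩]

lemma closure_le_stabilizer_inter_nonuniformLocus (hS : closure T ≤ stabilizer G S) :
    closure T ≤ stabilizer G (S ∩ nonuniformLocus Ω T) :=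
  (le_inf hS (closure_le_stabilizer_nonuniformLocus T)).trans
    stabilizer_inf_stabilizer_le_stabilizer_inter

lemma mem_stabilizer_inter_nonuniformLocus (hyS : y ∈ stabilizer G S) (hy : y ∈ centralizer T) :
    y ∈ stabilizer G (S ∩ nonuniformLocus Ω T) :=
  stabilizer_inf_stabilizer_le_stabilizer_inter
    ⟨hyS, centralizer_le_stabilizer_nonuniformLocus T hy⟩

lemma nonuniformLocus_mono (h : T ⊆ T') : nonuniformLocus Ω T ⊆ nonuniformLocus Ω T' := by
  intro p hp hT'
  refine hp fun a ha b hb => (hT' a (h ha) b (h hb)).mono ?_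
  rintro _ ⟨⟨g, hg⟩, rfl⟩
  exact ⟨⟨g, closure_mono h hg⟩, rfl⟩

lemma ActsUniformlyOn.notMem_nonuniformLocus (h : ActsUniformlyOn T S)
    (hS : closure T ≤ stabilizer G S) (hp : p ∈ S) : p ∉ nonuniformLocus Ω T :=
  not_not.2 (h.mono_right (orbit_subset_of_le_stabilizer hS hp))

lemma smul_eq_smul_of_notMem_nonuniformLocus (hp : p ∉ nonuniformLocus Ω T) (ha : a ∈ T)
    (hb : b ∈ T) : a • p = b • p :=
  not_not.1 hp a ha b hb (mem_orbit_self p)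

lemma actsUniformlyOn_of_disjoint_nonuniformLocus (h : Disjoint S (nonuniformLocus Ω T)) :
    ActsUniformlyOn T S :=
  fun _ ha _ hb _ hp => smul_eq_smul_of_notMem_nonuniformLocus (h.notMem_of_mem_left hp) ha hb

lemma actsUniformlyOn_of_inter_nonuniformLocus (hS : closure T ≤ stabilizer G S)
    (h : ActsUniformlyOn T (S ∩ nonuniformLocus Ω T)) : ActsUniformlyOn T S :=
  actsUniformlyOn_of_disjoint_nonuniformLocus <| Set.disjoint_left.2 fun _ hpS hp =>
    h.notMem_nonuniformLocus (closure_le_stabilizer_inter_nonuniformLocus hS) ⟨hpS, hp⟩ hp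

end Uniformity

section Braid

/-- The braid relation `aba = bab`. -/
def BraidRel (a b : G) : Prop := a * b * a = b * a * b

variable {a b c u v w : G} {S : Set Ω}

lemma BraidRel.symm (h : BraidRel a b) : BraidRel b a := Eq.symm h

lemma BraidRel.conj_mul_left (h : BraidRel a b) : MulAut.conj (a * b) a = b := by
  rw [MulAut.conj_apply, mul_inv_eq_iff_eq_mul, ← mul_assoc]
  exact h

lemma BraidRel.eqOn_of_smul_comm (h : BraidRel a b) (hb : b ∈ stabilizer G S)
    (hab : ∀ p ∈ S, a • b • p = b • a • p) : Set.EqOn (a • · : Ω → Ω) (b • ·) S := by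
  intro r hr
  have hr' : b⁻¹ • r ∈ S := (mem_stabilizer_set.1 (inv_mem hb) r).2 hr
  have hbr : b • b⁻¹ • r ∈ S := (mem_stabilizer_set.1 hb _).2 hr'
  have haba : a • b • a • b⁻¹ • r = b • a • b • b⁻¹ • r := by
    simpa only [mul_smul] using congrArg (· • b⁻¹ • r) h
  rw [← hab _ hr', ← hab _ hbr, smul_left_cancel_iff, smul_inv_smul] at haba
  exact haba

lemma BraidRel.eqOn_of_eqOn_of_commute (h : BraidRel a b) (hac : Commute a c)
    (ha : a ∈ stabilizer G S) (hb : b ∈ stabilizer G S)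
    (hbc : Set.EqOn (b • · : Ω → Ω) (c • ·) S) : Set.EqOn (a • · : Ω → Ω) (b • ·) S :=
  h.eqOn_of_smul_comm hb fun p hp => by
    rw [show b • p = c • p from hbc hp, smul_smul_comm_of_commute hac,
      ← show b • a • p = c • a • p from hbc ((mem_stabilizer_set.1 ha p).2 hp)]

lemma BraidRel.eqOn_of_differences_comm (h : BraidRel v w) (hv : Commute u v)
    (hw : Commute u w) (huS : u ∈ stabilizer G S) (hwS : w ∈ stabilizer G S)
    (hcomm : ∀ p ∈ S, (v * u⁻¹) • (w * u⁻¹) • p = (w * u⁻¹) • (v * u⁻¹) • p) :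
    Set.EqOn (v • · : Ω → Ω) (w • ·) S := by
  refine h.eqOn_of_smul_comm hwS fun p hp => ?_
  have hcancel : ∀ x y : G, Commute u y → (x * u⁻¹) • (y * u⁻¹) • u • u • p = x • y • p := by
    intro x y huy
    simp only [smul_smul, mul_assoc, inv_mul_cancel_left, ← huy.eq]
  rw [← hcancel v w hw, ← hcancel w v hv]
  exact hcomm _ ((mem_stabilizer_set.1 huS _).2 ((mem_stabilizer_set.1 huS _).2 hp))

end Braid

section ArtinFamily

variable {ι : Type*} {Γ : SimpleGraph ι} {t : ι → G} {J J' : Set ι} {S : Set Ω} {p : Ω}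

/-- The members of the family `t` indexed by `J` satisfy the Artin relations of the graph `Γ`:
adjacent indices give braided elements, non-adjacent ones commuting elements. -/
structure IsArtinFamily (Γ : SimpleGraph ι) (t : ι → G) (J : Set ι) : Prop where
  braid_of_adj : ∀ i ∈ J, ∀ j ∈ J, Γ.Adj i j → BraidRel (t i) (t j)
  commute_of_not_adj : ∀ i ∈ J, ∀ j ∈ J, ¬ Γ.Adj i j → Commute (t i) (t j)

lemma IsArtinFamily.mono (h : IsArtinFamily Γ t J) (hJ : J' ⊆ J) : IsArtinFamily Γ t J' where
  braid_of_adj i hi j hj := h.braid_of_adj i (hJ hi) j (hJ hj)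
  commute_of_not_adj i hi j hj := h.commute_of_not_adj i (hJ hi) j (hJ hj)

lemma eq_of_preconnected_induce {α : Type*} (hJ : (Γ.induce J).Preconnected) {f : ι → α}
    (hf : ∀ i ∈ J, ∀ j ∈ J, Γ.Adj i j → f i = f j) {i j : ι} (hi : i ∈ J) (hj : j ∈ J) :
    f i = f j := by
  suffices hreach : ∀ k : J, f i = f k from hreach ⟨j, hj⟩
  intro k
  induction (SimpleGraph.reachable_iff_reflTransGen _ _).1 (hJ ⟨i, hi⟩ k) with
  | refl => rfl
  | @tail k l _ hkl ih => exact ih.trans (hf k k.2 l l.2 hkl)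

lemma IsArtinFamily.actsUniformlyOn (h : IsArtinFamily Γ t J) (hΓ : Γ.CliqueFree 3)
    (hJ : (Γ.induce J).Preconnected) (hS : closure (t '' J) ≤ stabilizer G S) {i j : ι}
    (hi : i ∈ J) (hj : j ∈ J) (hij : Γ.Adj i j)
    (heq : Set.EqOn (t i • · : Ω → Ω) (t j • ·) S) : ActsUniformlyOn (t '' J) S := by
  classical
  have hmem : ∀ k ∈ J, t k ∈ stabilizer G S := fun k hk =>
    hS (subset_closure (Set.mem_image_of_mem t hk))
  have hspread : ∀ k : J, Set.EqOn (t i • · : Ω → Ω) (t k • ·) S ∧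
      ∃ l ∈ J, Γ.Adj k l ∧ Set.EqOn (t k • · : Ω → Ω) (t l • ·) S := by
    intro k
    induction (SimpleGraph.reachable_iff_reflTransGen _ _).1 (hJ ⟨i, hi⟩ k) with
    | refl => exact ⟨Set.eqOn_refl _ _, j, hj, hij, heq⟩
    | @tail k m _ hkm ih =>
      obtain ⟨hik, l, hl, hkl, hkl_eq⟩ := ih
      have hmk : Γ.Adj m k := hkm.symm
      have hml : ¬ Γ.Adj m l := fun hml => hΓ {(m : ι), (k : ι), l} <|
        SimpleGraph.is3Clique_triple_iff.2 ⟨hmk, hml, hkl⟩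
      have hmk_eq : Set.EqOn (t m • · : Ω → Ω) (t k • ·) S :=
        (h.braid_of_adj m m.2 k k.2 hmk).eqOn_of_eqOn_of_commute
          (h.commute_of_not_adj m m.2 l hl hml) (hmem m m.2) (hmem k k.2) hkl_eq
      exact ⟨hik.trans hmk_eq.symm, k, k.2, hmk, hmk_eq⟩
  rintro _ ⟨k, hk, rfl⟩ _ ⟨l, hl, rfl⟩
  exact (hspread ⟨k, hk⟩).1.symm.trans (hspread ⟨l, hl⟩).1

lemma ActsUniformlyOn.orbit_closure_eq [Finite Ω] {T : Set G} {a : G}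
    (h : ActsUniformlyOn T (orbit (closure T) p)) (ha : a ∈ T) :
    orbit (closure T) p = orbit (zpowers a) p := by
  have hle : zpowers a ≤ closure T := zpowers_le.2 (subset_closure ha)
  have hsub : orbit (zpowers a) p ⊆ orbit (closure T) p :=
    orbit_subset_of_le_stabilizer (hle.trans (le_stabilizer_orbit _ p)) (mem_orbit_self p)
  refine (orbit_subset_of_le_stabilizer ?_ (mem_orbit_self p)).antisymm hsub
  refine (closure_le _).2 fun b hb => (mem_stabilizer_set' (Set.toFinite _)).2 fun q hq => ?_
  rw [show b • q = a • q from h b hb a ha (hsub hq)]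
  exact (mem_stabilizer_set.1 (le_stabilizer_orbit _ p (mem_zpowers a)) q).2 hq

lemma notMem_nonuniformLocus_of_preconnected_induce [Finite Ω]
    (hJ : (Γ.induce J).Preconnected)
    (hp : ∀ i ∈ J, ∀ j ∈ J, Γ.Adj i j → p ∉ nonuniformLocus Ω {t i, t j}) :
    p ∉ nonuniformLocus Ω (t '' J) := by
  have hunif : ∀ i ∈ J, ∀ j ∈ J, Γ.Adj i j →
      ActsUniformlyOn {t i, t j} (orbit (closure {t i, t j}) p) :=
    fun i hi j hj hij => not_not.1 (hp i hi j hj hij)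
  have horbit : ∀ i ∈ J, ∀ j ∈ J, orbit (zpowers (t i)) p = orbit (zpowers (t j)) p :=
    fun i hi j hj => eq_of_preconnected_induce hJ
      (fun i hi j hj hij => ((hunif i hi j hj hij).orbit_closure_eq (by simp)).symm.trans
        ((hunif i hi j hj hij).orbit_closure_eq (by simp))) hi hj
  rcases J.eq_empty_or_nonempty with rfl | ⟨i, hi⟩
  · exact not_not.2 (by simp [ActsUniformlyOn])
  have hstab : closure (t '' J) ≤ stabilizer G (orbit (zpowers (t i)) p) := by
    rw [closure_le]
    rintro _ ⟨j, hj, rfl⟩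
    rw [horbit i hi j hj]
    exact le_stabilizer_orbit _ p (mem_zpowers _)
  have heq : ∀ k ∈ J, ∀ l ∈ J, (orbit (zpowers (t i)) p).domRestrict (t k • · : Ω → Ω) =
      (orbit (zpowers (t i)) p).domRestrict (t l • ·) := fun k hk l hl =>
    eq_of_preconnected_induce (f := fun k => (orbit (zpowers (t i)) p).domRestrict (t k • ·)) hJ
      (fun k hk l hl hkl => Set.domRestrict_eq_domRestrict_iff.2 <| by
        rw [horbit i hi k hk, ← (hunif k hk l hl hkl).orbit_closure_eq (by simp)]
        exact actsUniformlyOn_pair.1 (hunif k hk l hl hkl)) hk hl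
  refine ActsUniformlyOn.notMem_nonuniformLocus ?_ hstab (mem_orbit_self p)
  rintro _ ⟨k, hk, rfl⟩ _ ⟨l, hl, rfl⟩
  exact Set.domRestrict_eq_domRestrict_iff.1 (heq k hk l hl)

end ArtinFamily

section Humphries

variable {t : ℕ → G} {N : ℕ}

/-- The intersection graph of the Humphries curves: the chain `1 - 2 - 3 - ⋯`, with the extra
vertex `0` attached to `4`. -/
def humphriesGraph : SimpleGraph ℕ :=
  SimpleGraph.fromRel fun i j => (1 ≤ i ∧ j = i + 1) ∨ (i = 0 ∧ j = 4)

lemma humphriesGraph_adj {i j : ℕ} : humphriesGraph.Adj i j ↔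
    (1 ≤ i ∧ j = i + 1) ∨ (1 ≤ j ∧ i = j + 1) ∨ (i = 0 ∧ j = 4) ∨ (i = 4 ∧ j = 0) := by
  rw [humphriesGraph, SimpleGraph.fromRel_adj]
  omega

lemma humphriesGraph_cliqueFree : humphriesGraph.CliqueFree 3 := by
  intro s hs
  obtain ⟨i, j, k, hij, hik, hjk, -⟩ := SimpleGraph.is3Clique_iff.1 hs
  rw [humphriesGraph_adj] at hij hik hjk
  omega

lemma humphriesGraph_induce_Iic_preconnected (hN : 4 ≤ N) :
    (humphriesGraph.induce (Set.Iic N)).Preconnected := by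
  have hadj : ∀ i j (hi : i ≤ N) (hj : j ≤ N), humphriesGraph.Adj i j →
      (humphriesGraph.induce (Set.Iic N)).Reachable ⟨i, hi⟩ ⟨j, hj⟩ :=
    fun i j hi hj h => SimpleGraph.Adj.reachable (SimpleGraph.induce_adj.2 h)
  have hchain : ∀ i (hi : i ≤ N), 1 ≤ i →
      (humphriesGraph.induce (Set.Iic N)).Reachable ⟨1, show 1 ≤ N by omega⟩ ⟨i, hi⟩ := by
    intro i hi h1
    induction i, h1 using Nat.le_induction with
    | base => rfl
    | succ i h1 ih =>
      exact (ih (by omega)).trans (hadj i (i + 1) _ hi (humphriesGraph_adj.2 (by omega)))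
  have hfrom : ∀ i (hi : i ≤ N),
      (humphriesGraph.induce (Set.Iic N)).Reachable ⟨1, show 1 ≤ N by omega⟩ ⟨i, hi⟩ := by
    intro i hi
    rcases Nat.eq_zero_or_pos i with rfl | h1
    · exact (hchain 4 hN (by omega)).trans (hadj 4 0 hN hi (humphriesGraph_adj.2 (by omega)))
    · exact hchain i hi h1
  exact fun i j => (hfrom i i.2).symm.trans (hfrom j j.2)

lemma isArtinFamily_humphriesGraph
    (hcomm : ∀ i j : ℕ, 1 ≤ i → j ≤ N → i + 2 ≤ j → Commute (t i) (t j))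
    (hbraid : ∀ i : ℕ, 1 ≤ i → i + 1 ≤ N → BraidRel (t i) (t (i + 1)))
    (hcomm0 : ∀ i : ℕ, 1 ≤ i → i ≤ N → i ≠ 4 → Commute (t 0) (t i))
    (hbraid0 : BraidRel (t 0) (t 4)) : IsArtinFamily humphriesGraph t (Set.Iic N) where
  braid_of_adj i hi j hj hij := by
    rcases humphriesGraph_adj.1 hij with ⟨hi1, rfl⟩ | ⟨hj1, rfl⟩ | ⟨rfl, rfl⟩ | ⟨rfl, rfl⟩
    exacts [hbraid i hi1 hj, (hbraid j hj1 hi).symm, hbraid0, hbraid0.symm]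
  commute_of_not_adj i hi j hj hij := by
    rw [Set.mem_Iic] at hi hj
    rw [humphriesGraph_adj] at hij
    wlog hle : i ≤ j generalizing i j
    · exact (this j hj i hi (by omega) (by omega)).symm
    rcases hle.eq_or_lt with rfl | hlt
    · exact Commute.refl _
    rcases Nat.eq_zero_or_pos i with rfl | hi0
    · exact hcomm0 j hlt hj (by omega)
    · exact hcomm i j hi0 hj (by omega)

lemma IsArtinFamily.braid (h : IsArtinFamily humphriesGraph t (Set.Iic N)) (i j : ℕ)
    (hi : i ≤ N := by omega) (hj : j ≤ N := by omega)
    (hij : humphriesGraph.Adj i j := by rw [humphriesGraph_adj]; omega) :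
    BraidRel (t i) (t j) :=
  h.braid_of_adj i hi j hj hij

lemma IsArtinFamily.commute (h : IsArtinFamily humphriesGraph t (Set.Iic N)) (i j : ℕ)
    (hi : i ≤ N := by omega) (hj : j ≤ N := by omega)
    (hij : ¬ humphriesGraph.Adj i j := by rw [humphriesGraph_adj]; omega) :
    Commute (t i) (t j) :=
  h.commute_of_not_adj i hi j hj hij

end Humphries

section SmallSets

variable {S : Set Ω} {p : Ω} {x s t : G} {T : Set G}

lemma eq_of_ncard_le_two [Finite Ω] (hS : S.ncard ≤ 2) {p q r : Ω} (hp : p ∈ S) (hq : q ∈ S)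
    (hr : r ∈ S) (hpr : p ≠ r) (hqr : q ≠ r) : p = q := by
  by_contra hpq
  exact hS.not_gt ((Set.two_lt_ncard_iff).2 ⟨p, q, r, hp, hq, hr, hpq, hpr, hqr⟩)

lemma smul_smul_eq_self_of_ncard_le_two [Finite Ω] (hS : S.ncard ≤ 2) (hx : x ∈ stabilizer G S)
    (hp : p ∈ S) : x • x • p = p := by
  have hxp : x • p ∈ S := (mem_stabilizer_set.1 hx p).2 hp
  by_cases h : x • p = p
  · rw [h, h]
  · exact eq_of_ncard_le_two hS ((mem_stabilizer_set.1 hx _).2 hxp) hp hxp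
      (fun h' => h (smul_left_cancel x h')) (Ne.symm h)

lemma two_le_ncard_orbit_zpowers [Finite Ω] (hx : x • p ≠ p) :
    2 ≤ (orbit (zpowers x) p).ncard :=
  (Set.one_lt_ncard_iff).2
    ⟨p, x • p, mem_orbit_self p, ⟨⟨x, mem_zpowers x⟩, rfl⟩, hx.symm⟩

lemma closure_pair_le_iff {K : Subgroup G} : closure {s, t} ≤ K ↔ s ∈ K ∧ t ∈ K := by
  simp [closure_le, Set.insert_subset_iff]

lemma mem_centralizer_pair_iff : x ∈ centralizer {s, t} ↔ Commute x s ∧ Commute x t := by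
  simp only [mem_centralizer_iff, Set.mem_insert_iff, Set.mem_singleton_iff, forall_eq_or_imp,
    forall_eq, commute_iff_eq, @eq_comm G (x * _)]

lemma closure_le_centralizer_zpowers (hx : x ∈ centralizer T) :
    closure T ≤ centralizer (zpowers x : Set G) := by
  rw [← centralizer_closure] at hx
  exact le_centralizer_iff.1 (zpowers_le.2 hx)

lemma ncard_orbit_zpowers_eq (hx : x ∈ centralizer T) {q : Ω} (hq : q ∈ orbit (closure T) p) :
    (orbit (zpowers x) q).ncard = (orbit (zpowers x) p).ncard := by
  obtain ⟨⟨k, hk⟩, rfl⟩ := hq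
  change (orbit (zpowers x) (k • p)).ncard = _
  rw [← smul_orbit_of_mem_centralizer (closure_le_centralizer_zpowers hx hk), Set.ncard_smul_set]

end SmallSets

section UniformUpTo

/-- In finite `G`-sets of universe `u`, `T` acts uniformly on every set of at most `n` points
that is invariant under `T`. -/
def UniformUpTo (T : Set G) (n : ℕ) : Prop :=
  ∀ (Ω : Type u) [MulAction G Ω] [Finite Ω] (S : Set Ω),
    closure T ≤ stabilizer G S → S.ncard ≤ n → ActsUniformlyOn T S

variable [Finite Ω] {T : Set G} {n : ℕ} {S : Set Ω} {p : Ω} {s t : G}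

lemma UniformUpTo.lt_ncard_orbit (hT : UniformUpTo.{u} T n) (hp : p ∈ nonuniformLocus Ω T) :
    n < (orbit (closure T) p).ncard := by
  by_contra! hle
  exact hp (hT Ω _ (le_stabilizer_orbit _ p) hle)

lemma UniformUpTo.mul_ncard_image_orbit_le (hT : UniformUpTo.{u} T n)
    (hS : closure T ≤ stabilizer G S) :
    (n + 1) * ((fun p : Ω => orbit (closure T) p) '' (S ∩ nonuniformLocus Ω T)).ncard ≤
      S.ncard :=
  (_root_.mul_ncard_image_orbit_le
    (closure_le_stabilizer_inter_nonuniformLocus hS)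
    fun _ hp => hT.lt_ncard_orbit hp.2).trans (Set.ncard_le_ncard Set.inter_subset_left)

lemma BraidRel.uniformUpTo_two (h : BraidRel s t) : UniformUpTo.{u} {s, t} 2 := by
  intro Ω _ _ S hS hcard
  obtain ⟨hs, ht⟩ := closure_pair_le_iff.1 hS
  refine actsUniformlyOn_pair.2 (h.eqOn_of_smul_comm ht fun p hp => ?_)
  have hsp := (mem_stabilizer_set.1 hs p).2 hp
  have htp := (mem_stabilizer_set.1 ht p).2 hp
  have hstp := (mem_stabilizer_set.1 hs _).2 htp
  have htsp := (mem_stabilizer_set.1 ht _).2 hsp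
  by_cases hsfix : s • p = p
  · by_cases htfix : t • p = p
    · rw [htfix, hsfix, htfix]
    · rw [hsfix]
      refine eq_of_ncard_le_two hcard hstp htp hp (fun h' => htfix ?_) htfix
      exact smul_left_cancel s (h'.trans hsfix.symm)
  · by_cases htfix : t • p = p
    · rw [htfix]
      refine eq_of_ncard_le_two hcard hsp htsp hp hsfix fun h' => hsfix ?_
      exact smul_left_cancel t (h'.trans htfix.symm)
    · rw [eq_of_ncard_le_two hcard htp hsp hp htfix hsfix]
      rw [smul_smul_eq_self_of_ncard_le_two hcard hs hp,
        ← eq_of_ncard_le_two hcard htp hsp hp htfix hsfix,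
        smul_smul_eq_self_of_ncard_le_two hcard ht hp]

end UniformUpTo

section PairOrbits

variable [Finite Ω] {S : Set Ω} {p : Ω} {s t x : G}

lemma actsUniformlyOn_orbit_of_ncard_image_le_one (h : BraidRel s t)
    (hx : x ∈ centralizer {s, t})
    (hblocks : ((fun q : Ω => orbit (zpowers x) q) '' orbit (closure {s, t}) p).ncard ≤ 1) :
    ActsUniformlyOn {s, t} (orbit (closure {s, t}) p) := by
  obtain ⟨hs, ht⟩ := closure_pair_le_iff.1 (le_stabilizer_orbit (closure {s, t}) p)
  obtain ⟨hxs, hxt⟩ := mem_centralizer_pair_iff.1 hx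
  have hblock : ∀ g ∈ stabilizer G (orbit (closure {s, t}) p), ∀ q ∈ orbit (closure {s, t}) p,
      g • q ∈ orbit (zpowers x) q := fun g hg q hq => orbit_eq_iff.1 <|
    (Set.ncard_le_one_iff (Set.toFinite _)).1 hblocks
      (Set.mem_image_of_mem _ ((mem_stabilizer_set.1 hg q).2 hq)) (Set.mem_image_of_mem _ hq)
  exact actsUniformlyOn_pair.2 <| h.eqOn_of_smul_comm ht fun q hq =>
    smul_smul_comm_of_mem_orbit_zpowers hxs.symm hxt.symm (hblock s hs q hq) (hblock t ht q hq)

/- On the two blocks `s` and `t` act by the same involution, so `s * t` moves each point within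
its block and `(s * t) ^ 2 = s ^ 2 * t * s` is trivial. -/
lemma actsUniformlyOn_orbit_of_ncard_image_le_two (h : BraidRel s t)
    (hx : x ∈ centralizer {s, t})
    (hblock : ∀ q ∈ orbit (closure {s, t}) p, (orbit (zpowers x) q).ncard ≤ 2)
    (hblocks : ((fun q : Ω => orbit (zpowers x) q) '' orbit (closure {s, t}) p).ncard ≤ 2) :
    ActsUniformlyOn {s, t} (orbit (closure {s, t}) p) := by
  set O := orbit (closure {s, t}) p
  have hO : closure {s, t} ≤ stabilizer G O := le_stabilizer_orbit _ p
  obtain ⟨hs, ht⟩ := closure_pair_le_iff.1 hO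
  have hB : closure {s, t} ≤ stabilizer G ((fun q : Ω => orbit (zpowers x) q) '' O) :=
    (le_inf hO (closure_le_centralizer_zpowers hx)).trans
      (stabilizer_inf_centralizer_le_stabilizer_image_orbit _ O)
  have hst_block : ∀ q ∈ O, s * t ∈ stabilizer G (orbit (zpowers x) q) := by
    intro q hq
    have hqB := Set.mem_image_of_mem (fun q : Ω => orbit (zpowers x) q) hq
    rw [mem_stabilizer_iff, mul_smul, ← show s • orbit (zpowers x) q = t • orbit (zpowers x) q
      from actsUniformlyOn_pair.1 (h.uniformUpTo_two _ _ hB hblocks) hqB]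
    exact smul_smul_eq_self_of_ncard_le_two hblocks (closure_pair_le_iff.1 hB).1 hqB
  have hsq : ∀ q ∈ O, s • s • t • s • q = q := by
    intro q hq
    have hw := smul_smul_eq_self_of_ncard_le_two (hblock q hq) (hst_block q hq)
      (mem_orbit_self q)
    rwa [smul_smul, show s * t * (s * t) = s * (s * t * s) by rw [h]; group, mul_smul, mul_smul,
      mul_smul] at hw
  refine actsUniformlyOn_pair.2 (h.eqOn_of_smul_comm ht fun r hr => ?_)
  have hr' := hsq _ ((mem_stabilizer_set.1 (inv_mem hs) r).2 hr)
  rw [smul_inv_smul, eq_inv_smul_iff] at hr'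
  simpa only [smul_left_cancel_iff] using hr'.trans (hsq r hr).symm

lemma smul_eq_self_of_ncard_orbit_le_five (h : BraidRel s t) (hx : x ∈ centralizer {s, t})
    (hxO : x ∈ stabilizer G (orbit (closure {s, t}) p)) (hp : p ∈ nonuniformLocus Ω {s, t})
    (hcard : (orbit (closure {s, t}) p).ncard ≤ 5) : x • p = p := by
  by_contra hxp
  have hsize : ∀ q ∈ orbit (closure {s, t}) p,
      (orbit (zpowers x) q).ncard = (orbit (zpowers x) p).ncard :=
    fun q hq => ncard_orbit_zpowers_eq hx hq
  have hcount := mul_ncard_image_orbit_le (zpowers_le.2 hxO) fun q hq => (hsize q hq).ge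
  have htwo := two_le_ncard_orbit_zpowers hxp
  rcases Nat.lt_or_ge (orbit (zpowers x) p).ncard 3 with hlt | hge
  · exact hp (actsUniformlyOn_orbit_of_ncard_image_le_two h hx
      (fun q hq => (hsize q hq).trans_le (Nat.lt_succ_iff.1 hlt)) (by nlinarith))
  · exact hp (actsUniformlyOn_orbit_of_ncard_image_le_one h hx (by nlinarith))

lemma smul_eq_self_of_ncard_inter_nonuniformLocus_le_five (h : BraidRel s t)
    (hx : x ∈ centralizer {s, t}) (hS : closure {s, t} ≤ stabilizer G S)
    (hxS : x ∈ stabilizer G S) (hcard : (S ∩ nonuniformLocus Ω {s, t}).ncard ≤ 5)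
    (hp : p ∈ S ∩ nonuniformLocus Ω {s, t}) : x • p = p := by
  have hSU := closure_le_stabilizer_inter_nonuniformLocus hS
  rcases mem_stabilizer_orbit_or_two_mul_ncard_le hSU (by rwa [centralizer_closure])
    (mem_stabilizer_inter_nonuniformLocus hxS hx) hp with hxO | hhalf
  · exact smul_eq_self_of_ncard_orbit_le_five h hx hxO hp.2
      ((Set.ncard_le_ncard (orbit_subset_of_le_stabilizer hSU hp)).trans hcard)
  · have := h.uniformUpTo_two.lt_ncard_orbit hp.2
    omega

end PairOrbits

section HumphriesUniformity

variable {t : ℕ → G} {N n : ℕ} {S : Set Ω} {p : Ω} {x y z : G}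

lemma apply_mem_stabilizer (hS : closure (t '' Set.Iic N) ≤ stabilizer G S) (i : ℕ)
    (hi : i ≤ N := by omega) : t i ∈ stabilizer G S :=
  hS (subset_closure (Set.mem_image_of_mem t hi))

lemma nonuniformLocus_pair_subset_image_Iic (i j : ℕ) (hi : i ≤ N := by omega)
    (hj : j ≤ N := by omega) :
    nonuniformLocus Ω {t i, t j} ⊆ nonuniformLocus Ω (t '' Set.Iic N) :=
  nonuniformLocus_mono (Set.pair_subset (Set.mem_image_of_mem t hi) (Set.mem_image_of_mem t hj))

namespace IsArtinFamily

lemma actsUniformlyOn_of_eqOn (h : IsArtinFamily humphriesGraph t (Set.Iic N)) (hN : 4 ≤ N)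
    (hS : closure (t '' Set.Iic N) ≤ stabilizer G S) (i j : ℕ)
    (heq : Set.EqOn (t i • · : Ω → Ω) (t j • ·) S) (hi : i ≤ N := by omega)
    (hj : j ≤ N := by omega)
    (hij : humphriesGraph.Adj i j := by rw [humphriesGraph_adj]; omega) :
    ActsUniformlyOn (t '' Set.Iic N) S :=
  h.actsUniformlyOn humphriesGraph_cliqueFree (humphriesGraph_induce_Iic_preconnected hN) hS
    hi hj hij heq

/- The differences between the generators generate the commutator subgroup, which is perfect. -/
lemma actsUniformlyOn_of_differences_comm (h : IsArtinFamily humphriesGraph t (Set.Iic N))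
    (hN : 4 ≤ N) (hS : closure (t '' Set.Iic N) ≤ stabilizer G S)
    (hcomm : ∀ a ∈ t '' Set.Iic N, ∀ b ∈ t '' Set.Iic N, ∀ c ∈ t '' Set.Iic N, ∀ p ∈ S,
      (a * c⁻¹) • (b * c⁻¹) • p = (b * c⁻¹) • (a * c⁻¹) • p) :
    ActsUniformlyOn (t '' Set.Iic N) S := by
  have hmem : ∀ i ≤ N, t i ∈ t '' Set.Iic N := fun i hi => Set.mem_image_of_mem t hi
  refine h.actsUniformlyOn_of_eqOn hN hS 3 4 ?_
  exact (h.braid 3 4).eqOn_of_differences_comm (h.commute 1 3) (h.commute 1 4)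
    (apply_mem_stabilizer hS 1) (apply_mem_stabilizer hS 4)
    (hcomm _ (hmem 3 (by omega)) _ (hmem 4 hN) _ (hmem 1 (by omega)))

lemma mem_centralizer_image_Iic (h : IsArtinFamily humphriesGraph t (Set.Iic N)) {M k : ℕ}
    (hk : 5 ≤ k) (hkN : k ≤ N) (hM : M + 2 ≤ k) : t k ∈ centralizer (t '' Set.Iic M) := by
  rw [mem_centralizer_iff]
  rintro _ ⟨i, hi, rfl⟩
  rw [Set.mem_Iic] at hi
  exact h.commute i k

variable [Finite Ω]

lemma mul_ncard_orbit_zpowers_le (h : IsArtinFamily humphriesGraph t (Set.Iic N)) (hN : 4 ≤ N)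
    (hT : UniformUpTo.{u} (t '' Set.Iic N) n) (hp : p ∈ nonuniformLocus Ω (t '' Set.Iic N))
    (hy : y ∈ centralizer (t '' Set.Iic N))
    (hyO : y ∈ stabilizer G (orbit (closure (t '' Set.Iic N)) p)) :
    (n + 1) * (orbit (zpowers y) p).ncard ≤ (orbit (closure (t '' Set.Iic N)) p).ncard := by
  set T := t '' Set.Iic N
  set O := orbit (closure T) p
  have hO : closure T ≤ stabilizer G O := le_stabilizer_orbit _ p
  have hcount := mul_ncard_image_orbit_le (zpowers_le.2 hyO)
    fun q hq => (ncard_orbit_zpowers_eq hy hq).ge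
  suffices hblocks : n < ((fun q : Ω => orbit (zpowers y) q) '' O).ncard by
    rw [mul_comm]
    exact (Nat.mul_le_mul_left _ hblocks).trans hcount
  by_contra! hle
  have hB : ActsUniformlyOn T ((fun q : Ω => orbit (zpowers y) q) '' O) :=
    hT _ _ ((le_inf hO (closure_le_centralizer_zpowers hy)).trans
      (stabilizer_inf_centralizer_le_stabilizer_image_orbit _ O)) hle
  have hdiff : ∀ a ∈ T, ∀ c ∈ T, ∀ q ∈ O, (a * c⁻¹) • q ∈ orbit (zpowers y) q := by
    intro a ha c hc q hq
    have hq' : c⁻¹ • q ∈ O := (mem_stabilizer_set.1 (inv_mem (hO (subset_closure hc))) q).2 hq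
    have hcent := closure_le_centralizer_zpowers hy
    rw [← orbit_eq_iff, mul_smul, ← smul_orbit_of_mem_centralizer (hcent (subset_closure ha)),
      show a • orbit (zpowers y) (c⁻¹ • q) = c • orbit (zpowers y) (c⁻¹ • q) from
        hB a ha c hc (Set.mem_image_of_mem _ hq'),
      smul_orbit_of_mem_centralizer (hcent (subset_closure hc)), smul_inv_smul]
  have hcommute : ∀ a ∈ T, ∀ c ∈ T, Commute (a * c⁻¹) y := fun a ha c hc =>
    Commute.mul_left (mem_centralizer_iff.1 hy a ha)
      (Commute.inv_left (mem_centralizer_iff.1 hy c hc))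
  exact hp <| h.actsUniformlyOn_of_differences_comm hN hO fun a ha b hb c hc q hq =>
    smul_smul_comm_of_mem_orbit_zpowers (hcommute a ha c hc) (hcommute b hb c hc)
      (hdiff a ha c hc q hq) (hdiff b hb c hc q hq)

lemma smul_eq_self_of_ncard_orbit_lt (h : IsArtinFamily humphriesGraph t (Set.Iic N))
    (hN : 4 ≤ N) (hT : UniformUpTo.{u} (t '' Set.Iic N) n)
    (hp : p ∈ nonuniformLocus Ω (t '' Set.Iic N)) (hy : y ∈ centralizer (t '' Set.Iic N))
    (hyO : y ∈ stabilizer G (orbit (closure (t '' Set.Iic N)) p))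
    (hcard : (orbit (closure (t '' Set.Iic N)) p).ncard < 2 * (n + 1)) : y • p = p := by
  by_contra hyp
  have := h.mul_ncard_orbit_zpowers_le hN hT hp hy hyO
  nlinarith [two_le_ncard_orbit_zpowers hyp]

lemma smul_smul_eq_self_of_ncard_orbit_lt (h : IsArtinFamily humphriesGraph t (Set.Iic N))
    (hN : 4 ≤ N) (hT : UniformUpTo.{u} (t '' Set.Iic N) n)
    (hp : p ∈ nonuniformLocus Ω (t '' Set.Iic N)) (hy : y ∈ centralizer (t '' Set.Iic N))
    (hyO : y ∈ stabilizer G (orbit (closure (t '' Set.Iic N)) p))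
    (hcard : (orbit (closure (t '' Set.Iic N)) p).ncard < 3 * (n + 1)) : y • y • p = p := by
  refine smul_smul_eq_self_of_ncard_le_two ?_
    (le_stabilizer_orbit (zpowers y) p (mem_zpowers y)) (mem_orbit_self p)
  by_contra! hthree
  nlinarith [h.mul_ncard_orbit_zpowers_le hN hT hp hy hyO]

omit [Finite Ω] in
lemma uniformUpTo_five (h : IsArtinFamily humphriesGraph t (Set.Iic N)) (hN : 4 ≤ N) :
    UniformUpTo.{u} (t '' Set.Iic N) 5 := by
  intro Ω _ _ S hS hcard
  have hS₁₂ : closure {t 1, t 2} ≤ stabilizer G S :=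
    closure_pair_le_iff.2 ⟨apply_mem_stabilizer hS 1, apply_mem_stabilizer hS 2⟩
  have hcent : ∀ i ∈ ({0, 4} : Set ℕ), t i ∈ centralizer {t 1, t 2} := by
    rintro i (rfl | rfl)
    · exact mem_centralizer_pair_iff.2 ⟨h.commute 0 1, h.commute 0 2⟩
    · exact mem_centralizer_pair_iff.2 ⟨h.commute 4 1, h.commute 4 2⟩
  set U := S ∩ nonuniformLocus Ω {t 1, t 2}
  have hUS : U.ncard ≤ S.ncard := Set.ncard_le_ncard Set.inter_subset_left
  rcases U.eq_empty_or_nonempty with hempty | ⟨p, hp⟩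
  · refine h.actsUniformlyOn_of_eqOn hN hS 1 2 (actsUniformlyOn_pair.1 ?_)
    exact actsUniformlyOn_of_disjoint_nonuniformLocus (Set.disjoint_iff_inter_eq_empty.2 hempty)
  have hfix : ∀ i ∈ ({0, 4} : Set ℕ), ∀ q ∈ U, t i • q = q := by
    intro i hi q hq
    refine smul_eq_self_of_ncard_inter_nonuniformLocus_le_five (h.braid 1 2) (hcent i hi) hS₁₂
      (apply_mem_stabilizer hS i ?_) (hUS.trans hcard) hq
    rcases hi with rfl | rfl <;> omega
  have hrest : (S \ U).ncard ≤ 2 := by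
    have hthree := (h.braid 1 2).uniformUpTo_two.lt_ncard_orbit hp.2
    have horbit : _ ≤ U.ncard := Set.ncard_le_ncard (orbit_subset_of_le_stabilizer
      (closure_le_stabilizer_inter_nonuniformLocus hS₁₂) hp)
    have hsplit := Set.ncard_sdiff_add_ncard_of_subset (s := U) (t := S) Set.inter_subset_left
    omega
  have hrest_stab : closure {t 0, t 4} ≤ stabilizer G (S \ U) := by
    have hstab : ∀ i ∈ ({0, 4} : Set ℕ), i ≤ N → t i ∈ stabilizer G (S \ U) :=
      fun i hi hiN => stabilizer_inf_stabilizer_le_stabilizer_sdiff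
        ⟨apply_mem_stabilizer hS i, mem_stabilizer_inter_nonuniformLocus
          (apply_mem_stabilizer hS i) (hcent i hi)⟩
    exact closure_pair_le_iff.2 ⟨hstab 0 (by simp) (Nat.zero_le N), hstab 4 (by simp) hN⟩
  refine h.actsUniformlyOn_of_eqOn hN hS 0 4 fun q hq => ?_
  by_cases hqU : q ∈ U
  · exact (hfix 0 (by simp) q hqU).trans (hfix 4 (by simp) q hqU).symm
  · exact actsUniformlyOn_pair.1 ((h.braid 0 4).uniformUpTo_two Ω _ hrest_stab hrest) ⟨hq, hqU⟩

lemma eqOn_orbit_of_mem_stabilizer (h : IsArtinFamily humphriesGraph t (Set.Iic N))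
    (hN : 4 ≤ N) (hT : UniformUpTo.{u} (t '' Set.Iic N) n)
    (hp : p ∈ nonuniformLocus Ω (t '' Set.Iic N))
    (hcard : (orbit (closure (t '' Set.Iic N)) p).ncard < 3 * (n + 1)) (hxz : BraidRel x z)
    (hx : x ∈ centralizer (t '' Set.Iic N)) (hz : z ∈ centralizer (t '' Set.Iic N))
    (hxO : x ∈ stabilizer G (orbit (closure (t '' Set.Iic N)) p))
    (hzO : z ∈ stabilizer G (orbit (closure (t '' Set.Iic N)) p)) :
    Set.EqOn (x • · : Ω → Ω) (z • ·) (orbit (closure (t '' Set.Iic N)) p) := by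
  set T := t '' Set.Iic N
  set O := orbit (closure T) p
  have hinvol : ∀ y ∈ centralizer T, y ∈ stabilizer G O → ∀ r ∈ O, y • y • r = r := by
    intro y hy hyO r hr
    have hrO : orbit (closure T) r = O := orbit_eq_iff.2 hr
    have hrT : r ∈ nonuniformLocus Ω T :=
      orbit_subset_of_le_stabilizer (closure_le_stabilizer_nonuniformLocus T) hp hr
    exact h.smul_smul_eq_self_of_ncard_orbit_lt hN hT hrT hy (by rwa [hrO]) (by rwa [hrO])
  refine hxz.eqOn_of_smul_comm hzO fun r hr => ?_
  have hzr : z • r ∈ O := (mem_stabilizer_set.1 hzO r).2 hr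
  have hxzr : x • z • r ∈ O := (mem_stabilizer_set.1 hxO _).2 hzr
  have hxzxz : x • z • x • z • r = r := by
    simpa only [mul_smul] using hinvol _ (mul_mem hx hz) (mul_mem hxO hzO) r hr
  rw [← hinvol z hz hzO _ hxzr,
    ← hinvol x hx hxO _ ((mem_stabilizer_set.1 hzO _).2 hxzr), hxzxz]

lemma actsUniformlyOn_inter_nonuniformLocus (h : IsArtinFamily humphriesGraph t (Set.Iic N))
    (hN : 4 ≤ N) (hS : closure (t '' Set.Iic N) ≤ stabilizer G S)
    (hcard : S.ncard ≤ 16) (hxz : BraidRel x z) (hx : x ∈ centralizer (t '' Set.Iic N))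
    (hz : z ∈ centralizer (t '' Set.Iic N)) (hxS : x ∈ stabilizer G S)
    (hzS : z ∈ stabilizer G S) :
    ActsUniformlyOn {x, z} (S ∩ nonuniformLocus Ω (t '' Set.Iic N)) := by
  set T := t '' Set.Iic N
  set U := S ∩ nonuniformLocus Ω T
  have hT : UniformUpTo.{u} T 5 := h.uniformUpTo_five hN
  have hUcard : U.ncard ≤ 16 := (Set.ncard_le_ncard Set.inter_subset_left).trans hcard
  have hUT : closure T ≤ stabilizer G U := closure_le_stabilizer_inter_nonuniformLocus hS
  have hUx : x ∈ stabilizer G U := mem_stabilizer_inter_nonuniformLocus hxS hx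
  have hUz : z ∈ stabilizer G U := mem_stabilizer_inter_nonuniformLocus hzS hz
  have hxK : x ∈ centralizer (closure T : Set G) := by rwa [centralizer_closure]
  have hzK : z ∈ centralizer (closure T : Set G) := by rwa [centralizer_closure]
  have hblocks : ActsUniformlyOn {x, z} ((fun p : Ω => orbit (closure T) p) '' U) := by
    have hcount : 6 * ((fun p : Ω => orbit (closure T) p) '' U).ncard ≤ S.ncard :=
      hT.mul_ncard_image_orbit_le hS
    exact hxz.uniformUpTo_two _ _ (closure_pair_le_iff.2
      ⟨stabilizer_inf_centralizer_le_stabilizer_image_orbit _ U ⟨hUx, hxK⟩,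
        stabilizer_inf_centralizer_le_stabilizer_image_orbit _ U ⟨hUz, hzK⟩⟩) (by omega)
  refine actsUniformlyOn_pair.2 fun q hq => ?_
  have hxz_orbit : x • orbit (closure T) q = z • orbit (closure T) q :=
    actsUniformlyOn_pair.1 hblocks (Set.mem_image_of_mem _ hq)
  rcases mem_stabilizer_orbit_or_two_mul_ncard_le hUT hxK hUx hq with hxO | hhalf
  · have hOcard : (orbit (closure T) q).ncard < 3 * (5 + 1) :=
      ((Set.ncard_le_ncard (orbit_subset_of_le_stabilizer hUT hq)).trans hUcard).trans_lt
        (by norm_num)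
    exact h.eqOn_orbit_of_mem_stabilizer hN hT hq.2 hOcard hxz hx hz hxO
      (hxz_orbit.symm.trans hxO) (mem_orbit_self q)
  · have hOcard : (orbit (closure T) q).ncard < 2 * (5 + 1) := by omega
    have hfix := h.smul_eq_self_of_ncard_orbit_lt hN hT hq.2 (mul_mem (inv_mem hz) hx)
      (by rw [mem_stabilizer_iff, mul_smul, hxz_orbit, inv_smul_smul]) hOcard
    rwa [mul_smul, inv_smul_eq_iff] at hfix

end IsArtinFamily

end HumphriesUniformity

section Supports

variable {S : Set Ω} {p : Ω} {a b c d x : G}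

lemma subset_fixedBy_union_of_braidRel (h : S ⊆ fixedBy Ω a ∪ fixedBy Ω b) (hac : BraidRel a c)
    (hab : Commute a b) (hcb : Commute c b) (ha : a ∈ stabilizer G S)
    (hc : c ∈ stabilizer G S) : S ⊆ fixedBy Ω c ∪ fixedBy Ω b := by
  have h' := Set.smul_set_mono (a := a * c) h
  rwa [mem_stabilizer_iff.1 (mul_mem ha hc), Set.smul_set_union, smul_fixedBy, smul_fixedBy,
    ← MulAut.conj_apply, hac.conj_mul_left, (hab.mul_left hcb).eq, mul_inv_cancel_right] at h'

lemma BraidRel.ncard_sdiff_fixedBy_eq (h : BraidRel a c) (ha : a ∈ stabilizer G S)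
    (hc : c ∈ stabilizer G S) : (S \ fixedBy Ω a).ncard = (S \ fixedBy Ω c).ncard := by
  rw [← Set.ncard_smul_set (a * c) (S \ fixedBy Ω a), Set.smul_set_sdiff, smul_fixedBy,
    mem_stabilizer_iff.1 (mul_mem ha hc), ← MulAut.conj_apply, h.conj_mul_left]

variable [Finite Ω]

/- `a` maps the points moved by `a` but not by `c` to points moved by both. -/
lemma BraidRel.ncard_sdiff_fixedBy_le (h : BraidRel a c) (ha : a ∈ stabilizer G S) :
    (S \ fixedBy Ω a).ncard ≤ 2 * (S \ (fixedBy Ω a ∪ fixedBy Ω c)).ncard := by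
  have hmaps : (a • ·) '' ((S \ fixedBy Ω a) ∩ fixedBy Ω c) ⊆
      S \ (fixedBy Ω a ∪ fixedBy Ω c) := by
    rintro _ ⟨p, ⟨⟨hpS, hap⟩, hcp⟩, rfl⟩
    refine ⟨(mem_stabilizer_set.1 ha p).2 hpS, ?_⟩
    rintro (haap | hcap)
    · exact hap (smul_mem_fixedBy_iff_mem_fixedBy.1 haap)
    · have haca : a • c • a • p = c • a • c • p := by
        simpa only [mul_smul] using congrArg (· • p) h
      rw [mem_fixedBy] at hcap hcp
      rw [hcap, hcp, hcap] at haca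
      exact hap (smul_left_cancel a haca)
  have hle := Set.ncard_le_ncard hmaps
  rw [Set.ncard_image_of_injective _ (MulAction.injective a)] at hle
  have hsplit := Set.ncard_inter_add_ncard_sdiff_eq_ncard (S \ fixedBy Ω a) (fixedBy Ω c)
  rw [Set.sdiff_sdiff] at hsplit
  omega

lemma subset_fixedBy_of_three_braidRel (hb : BraidRel a b) (hc : BraidRel a c)
    (hd : BraidRel a d) (ha : a ∈ stabilizer G S) (hbc : S ⊆ fixedBy Ω b ∪ fixedBy Ω c)
    (hbd : S ⊆ fixedBy Ω b ∪ fixedBy Ω d) (hcd : S ⊆ fixedBy Ω c ∪ fixedBy Ω d) :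
    S ⊆ fixedBy Ω a := by
  have hdisj : ∀ {x y : G}, S ⊆ fixedBy Ω x ∪ fixedBy Ω y →
      Disjoint (S \ (fixedBy Ω a ∪ fixedBy Ω x)) (S \ (fixedBy Ω a ∪ fixedBy Ω y)) := by
    intro x y hxy
    refine Set.disjoint_left.2 fun p hpx hpy => ?_
    rcases hxy hpx.1 with hp | hp
    · exact hpx.2 (Or.inr hp)
    · exact hpy.2 (Or.inr hp)
  have hsub : ∀ x : G, S \ (fixedBy Ω a ∪ fixedBy Ω x) ⊆ S \ fixedBy Ω a :=
    fun x => Set.sdiff_subset_sdiff_right Set.subset_union_left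
  have hunion := Set.ncard_le_ncard (Set.union_subset (Set.union_subset (hsub b) (hsub c)) (hsub d))
  rw [Set.ncard_union_eq ((hdisj hbd).union_left (hdisj hcd)),
    Set.ncard_union_eq (hdisj hbc)] at hunion
  have hhalf_b := hb.ncard_sdiff_fixedBy_le ha
  have hhalf_c := hc.ncard_sdiff_fixedBy_le ha
  have hhalf_d := hd.ncard_sdiff_fixedBy_le ha
  rw [← Set.sdiff_eq_empty, ← Set.ncard_eq_zero]
  omega

lemma two_le_ncard_sdiff_fixedBy (ha : a ∈ stabilizer G S) (hp : p ∈ S)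
    (hap : a • p ≠ p) : 2 ≤ (S \ fixedBy Ω a).ncard :=
  (Set.one_lt_ncard_iff).2 ⟨p, a • p, ⟨hp, hap⟩, ⟨(mem_stabilizer_set.1 ha p).2 hp,
    fun h => hap (smul_mem_fixedBy_iff_mem_fixedBy.1 h)⟩, hap.symm⟩

lemma four_le_ncard_sdiff_fixedBy (hax : Commute a x) (ha : a ∈ stabilizer G S)
    {q : Ω} (hp : p ∈ S) (hap : a • p ≠ p) (hxp : x • p = p) (hq : q ∈ S) (haq : a • q ≠ q)
    (hxq : x • q ≠ q) : 4 ≤ (S \ fixedBy Ω a).ncard := by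
  have hafix : a ∈ stabilizer G (fixedBy Ω x) := by
    rw [mem_stabilizer_iff, smul_fixedBy, hax.eq, mul_inv_cancel_right]
  have hfixed := two_le_ncard_sdiff_fixedBy
    (stabilizer_inf_stabilizer_le_stabilizer_inter ⟨ha, hafix⟩) (show p ∈ S ∩ fixedBy Ω x from
      ⟨hp, hxp⟩) hap
  have hmoved := two_le_ncard_sdiff_fixedBy
    (stabilizer_inf_stabilizer_le_stabilizer_sdiff ⟨ha, hafix⟩) (show q ∈ S \ fixedBy Ω x from
      ⟨hq, hxq⟩) haq
  rw [← Set.ncard_inter_add_ncard_sdiff_eq_ncard (S \ fixedBy Ω a) (fixedBy Ω x),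
    Set.sdiff_inter_right_comm, Set.sdiff_sdiff_comm]
  exact add_le_add hfixed hmoved

omit [Finite Ω] in
lemma ncard_inter_nonuniformLocus_pair_eq (hab : BraidRel a b) (hbc : BraidRel b c)
    (hac : Commute a c) (ha : a ∈ stabilizer G S) (hb : b ∈ stabilizer G S)
    (hc : c ∈ stabilizer G S) :
    (S ∩ nonuniformLocus Ω {a, b}).ncard = (S ∩ nonuniformLocus Ω {b, c}).ncard := by
  have hconj_a : MulAut.conj (a * b * c) a = b := by
    rw [map_mul, MulAut.mul_apply, MulAut.conj_apply c, hac.symm.eq, mul_inv_cancel_right,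
      hab.conj_mul_left]
  have hconj_b : MulAut.conj (a * b * c) b = c := by
    rw [mul_assoc, map_mul, MulAut.mul_apply, hbc.conj_mul_left, MulAut.conj_apply, hac.eq,
      mul_inv_cancel_right]
  rw [← Set.ncard_smul_set (a * b * c), Set.smul_set_inter, smul_nonuniformLocus,
    mem_stabilizer_iff.1 (mul_mem (mul_mem ha hb) hc), ← Set.image_smul, Set.image_pair,
    MulAut.smul_def, MulAut.smul_def, hconj_a, hconj_b]

end Supports

section DisjointSupports

variable {t : ℕ → G} {N : ℕ} {S : Set Ω}

namespace IsArtinFamily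

lemma subset_fixedBy_union_move (h : IsArtinFamily humphriesGraph t (Set.Iic N))
    (hS : closure (t '' Set.Iic N) ≤ stabilizer G S) {i j : ℕ}
    (hij : S ⊆ fixedBy Ω (t i) ∪ fixedBy Ω (t j)) (k : ℕ) (hi : i ≤ N := by omega)
    (hj : j ≤ N := by omega) (hk : k ≤ N := by omega)
    (hik : humphriesGraph.Adj i k := by rw [humphriesGraph_adj]; omega)
    (hij_adj : ¬ humphriesGraph.Adj i j := by rw [humphriesGraph_adj]; omega)
    (hkj_adj : ¬ humphriesGraph.Adj k j := by rw [humphriesGraph_adj]; omega) :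
    S ⊆ fixedBy Ω (t k) ∪ fixedBy Ω (t j) :=
  subset_fixedBy_union_of_braidRel hij (h.braid i k hi hk hik) (h.commute i j hi hj hij_adj)
    (h.commute k j hk hj hkj_adj) (apply_mem_stabilizer hS i) (apply_mem_stabilizer hS k)

lemma actsUniformlyOn_of_subset_fixedBy (h : IsArtinFamily humphriesGraph t (Set.Iic N))
    (hN : 4 ≤ N) (hS : closure (t '' Set.Iic N) ≤ stabilizer G S) (i j : ℕ)
    (hfix : S ⊆ fixedBy Ω (t i)) (hi : i ≤ N := by omega) (hj : j ≤ N := by omega)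
    (hij : humphriesGraph.Adj i j := by rw [humphriesGraph_adj]; omega) :
    ActsUniformlyOn (t '' Set.Iic N) S := by
  refine h.actsUniformlyOn_of_eqOn hN hS i j ((h.braid i j hi hj hij).eqOn_of_smul_comm
    (apply_mem_stabilizer hS j) fun p hp => ?_) hi hj hij
  rw [show t i • p = p from hfix hp]
  exact hfix ((mem_stabilizer_set.1 (apply_mem_stabilizer hS j) p).2 hp)

variable [Finite Ω]

/- Braid moves carry the disjointness of the supports of `t 1` and `t 5` to the three arms `3`, `5`,
`0` around the vertex `4`. -/
lemma actsUniformlyOn_of_subset_fixedBy_union (h : IsArtinFamily humphriesGraph t (Set.Iic N))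
    (hN : 7 ≤ N) (hS : closure (t '' Set.Iic N) ≤ stabilizer G S)
    (h₁₅ : S ⊆ fixedBy Ω (t 1) ∪ fixedBy Ω (t 5)) : ActsUniformlyOn (t '' Set.Iic N) S := by
  have h₃₅ := h.subset_fixedBy_union_move hS (h.subset_fixedBy_union_move hS h₁₅ 2) 3
  rw [Set.union_comm] at h₁₅
  have h₀₁ := h.subset_fixedBy_union_move hS (h.subset_fixedBy_union_move hS h₁₅ 4) 0
  have h₆₁ := h.subset_fixedBy_union_move hS h₁₅ 6
  rw [Set.union_comm] at h₀₁ h₆₁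
  have h₃₀ := h.subset_fixedBy_union_move hS (h.subset_fixedBy_union_move hS h₀₁ 2) 3
  have h₃₆ := h.subset_fixedBy_union_move hS (h.subset_fixedBy_union_move hS h₆₁ 2) 3
  have h₀₆ := h.subset_fixedBy_union_move hS (h.subset_fixedBy_union_move hS h₃₆ 4) 0
  rw [Set.union_comm] at h₀₆
  have h₅₀ := h.subset_fixedBy_union_move hS h₀₆ 5
  exact h.actsUniformlyOn_of_subset_fixedBy (by omega) hS 4 3 <|
    subset_fixedBy_of_three_braidRel (h.braid 4 3) (h.braid 4 5) (h.braid 4 0)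
      (apply_mem_stabilizer hS 4) h₃₅ h₃₀ h₅₀

end IsArtinFamily

end DisjointSupports

section BaseCase

variable {t : ℕ → G} {N : ℕ} {S : Set Ω} {p : Ω}

namespace IsArtinFamily

lemma ncard_inter_nonuniformLocus_adj_eq (h : IsArtinFamily humphriesGraph t (Set.Iic N))
    (hS : closure (t '' Set.Iic N) ≤ stabilizer G S) {i j : ℕ}
    (hi : i ≤ N) (hj : j ≤ N) (hij : humphriesGraph.Adj i j) :
    (S ∩ nonuniformLocus Ω {t i, t j}).ncard = (S ∩ nonuniformLocus Ω {t 1, t 2}).ncard := by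
  have hchain : ∀ i, 1 ≤ i → i + 1 ≤ N → (S ∩ nonuniformLocus Ω {t i, t (i + 1)}).ncard =
      (S ∩ nonuniformLocus Ω {t 1, t 2}).ncard := by
    intro i hi
    induction i, hi using Nat.le_induction with
    | base => exact fun _ => rfl
    | succ i hi ih =>
      intro hiN
      rw [← ih (by omega)]
      exact (ncard_inter_nonuniformLocus_pair_eq (h.braid i (i + 1)) (h.braid (i + 1) (i + 2))
        (h.commute i (i + 2)) (apply_mem_stabilizer hS i) (apply_mem_stabilizer hS (i + 1))
        (apply_mem_stabilizer hS (i + 2))).symm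
  have hbranch : 4 ≤ N → (S ∩ nonuniformLocus Ω {t 4, t 0}).ncard =
      (S ∩ nonuniformLocus Ω {t 1, t 2}).ncard := by
    intro hN
    rw [← hchain 3 (by omega) hN]
    exact (ncard_inter_nonuniformLocus_pair_eq (h.braid 3 4) (h.braid 4 0) (h.commute 3 0)
      (apply_mem_stabilizer hS 3) (apply_mem_stabilizer hS 4) (apply_mem_stabilizer hS 0)).symm
  rcases humphriesGraph_adj.1 hij with ⟨hi1, rfl⟩ | ⟨hj1, rfl⟩ | ⟨rfl, rfl⟩ | ⟨rfl, rfl⟩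
  · exact hchain i hi1 hj
  · rw [Set.pair_comm]
    exact hchain j hj1 hi
  · rw [Set.pair_comm]
    exact hbranch hj
  · exact hbranch hi

variable [Finite Ω]

lemma disjoint_inter_nonuniformLocus_six_seven
    (h : IsArtinFamily humphriesGraph t (Set.Iic N)) (hN : 7 ≤ N)
    (hS : closure (t '' Set.Iic N) ≤ stabilizer G S) (hcard : S.ncard ≤ 16) :
    Disjoint (S ∩ nonuniformLocus Ω (t '' Set.Iic 4)) (nonuniformLocus Ω {t 6, t 7}) := by
  have hIic : Set.Iic 4 ⊆ Set.Iic N := Set.Iic_subset_Iic.2 (by omega)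
  have hS₆ : t 6 ∈ stabilizer G S := apply_mem_stabilizer hS 6
  have hS₇ : t 7 ∈ stabilizer G S := apply_mem_stabilizer hS 7
  have h₆ : t 6 ∈ centralizer (t '' Set.Iic 4) := h.mem_centralizer_image_Iic (by omega)
    (by omega) le_rfl
  have h₇ : t 7 ∈ centralizer (t '' Set.Iic 4) := h.mem_centralizer_image_Iic (by omega)
    hN (by omega)
  have hunif := (h.mono hIic).actsUniformlyOn_inter_nonuniformLocus le_rfl
    ((Subgroup.closure_mono (Set.image_mono hIic)).trans hS) hcard (h.braid 6 7) h₆ h₇ hS₆ hS₇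
  exact Set.disjoint_left.2 fun p hp => hunif.notMem_nonuniformLocus (closure_pair_le_iff.2
    ⟨mem_stabilizer_inter_nonuniformLocus hS₆ h₆,
      mem_stabilizer_inter_nonuniformLocus hS₇ h₇⟩) hp

/- Every set invariant under `t 0, t 4, …, t 7` meets the loci of the edges `67` and `40` in equally
many points; this is applied to the part of `S` in the locus of `12`. -/
lemma disjoint_inter_nonuniformLocus_four_zero
    (h : IsArtinFamily humphriesGraph t (Set.Iic N)) (hN : 7 ≤ N)
    (hS : closure (t '' Set.Iic N) ≤ stabilizer G S) (hcard : S.ncard ≤ 16) :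
    Disjoint (S ∩ nonuniformLocus Ω {t 1, t 2}) (nonuniformLocus Ω {t 4, t 0}) := by
  set U := S ∩ nonuniformLocus Ω {t 1, t 2}
  have h₆₇ : U ∩ nonuniformLocus Ω {t 6, t 7} = ∅ :=
    Set.disjoint_iff_inter_eq_empty.1 <|
      (h.disjoint_inter_nonuniformLocus_six_seven hN hS hcard).mono_left
        (Set.inter_subset_inter_right S (nonuniformLocus_pair_subset_image_Iic 1 2))
  have hU : ∀ i ≤ N, i = 0 ∨ 4 ≤ i → t i ∈ stabilizer G U := by
    intro i hi hi'
    exact mem_stabilizer_inter_nonuniformLocus (apply_mem_stabilizer hS i)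
      (mem_centralizer_pair_iff.2 ⟨h.commute i 1, h.commute i 2⟩)
  have hU₄ := hU 4 (by omega) (by omega)
  have hU₅ := hU 5 (by omega) (by omega)
  have hU₆ := hU 6 (by omega) (by omega)
  rw [Set.disjoint_iff_inter_eq_empty, ← Set.ncard_eq_zero, Set.pair_comm,
    ncard_inter_nonuniformLocus_pair_eq (h.braid 0 4) (h.braid 4 5) (h.commute 0 5)
      (hU 0 (by omega) (by omega)) hU₄ hU₅,
    ncard_inter_nonuniformLocus_pair_eq (h.braid 4 5) (h.braid 5 6) (h.commute 4 6) hU₄ hU₅ hU₆,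
    ncard_inter_nonuniformLocus_pair_eq (h.braid 5 6) (h.braid 6 7) (h.commute 5 7) hU₅ hU₆
      (hU 7 hN (by omega)), h₆₇, Set.ncard_empty]

lemma ncard_inter_nonuniformLocus_adj_le_five
    (h : IsArtinFamily humphriesGraph t (Set.Iic N)) (hN : 7 ≤ N)
    (hS : closure (t '' Set.Iic N) ≤ stabilizer G S) (hcard : S.ncard ≤ 16) {i j : ℕ}
    (hi : i ≤ N) (hj : j ≤ N) (hij : humphriesGraph.Adj i j) :
    (S ∩ nonuniformLocus Ω {t i, t j}).ncard ≤ 5 := by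
  have h₁₂ := h.ncard_inter_nonuniformLocus_adj_eq hS hi hj hij
  have h₄₀ := h.ncard_inter_nonuniformLocus_adj_eq (i := 4) (j := 0) hS (by omega)
    (by omega) (by rw [humphriesGraph_adj]; omega)
  have h₆₇ := h.ncard_inter_nonuniformLocus_adj_eq (i := 6) (j := 7) hS (by omega)
    hN (by rw [humphriesGraph_adj]; omega)
  have hdisj := h.disjoint_inter_nonuniformLocus_six_seven hN hS hcard
  have hdisj' : Disjoint (S ∩ nonuniformLocus Ω {t 1, t 2} ∪ S ∩ nonuniformLocus Ω {t 4, t 0})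
      (S ∩ nonuniformLocus Ω {t 6, t 7}) := by
    refine (hdisj.mono_right Set.inter_subset_right).mono_left (Set.union_subset ?_ ?_)
    · exact Set.inter_subset_inter_right S (nonuniformLocus_pair_subset_image_Iic 1 2)
    · exact Set.inter_subset_inter_right S (nonuniformLocus_pair_subset_image_Iic 4 0)
  have hunion := Set.ncard_le_ncard (Set.union_subset (Set.union_subset
    (Set.inter_subset_left (s := S) (t := nonuniformLocus Ω {t 1, t 2}))
    (Set.inter_subset_left (s := S) (t := nonuniformLocus Ω {t 4, t 0})))
    (Set.inter_subset_left (s := S) (t := nonuniformLocus Ω {t 6, t 7})))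
  rw [Set.ncard_union_eq hdisj', Set.ncard_union_eq
    ((h.disjoint_inter_nonuniformLocus_four_zero hN hS hcard).mono_right Set.inter_subset_right)]
    at hunion
  omega

lemma notMem_nonuniformLocus_of_smul_ne (h : IsArtinFamily humphriesGraph t (Set.Iic N))
    (hN : 7 ≤ N) (hS : closure (t '' Set.Iic N) ≤ stabilizer G S) (hcard : S.ncard ≤ 16)
    (hp : p ∈ S) (h₁ : t 1 • p ≠ p) (h₅ : t 5 • p ≠ p) :
    p ∉ nonuniformLocus Ω (t '' Set.Iic N) := by
  refine notMem_nonuniformLocus_of_preconnected_induce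
    (humphriesGraph_induce_Iic_preconnected (by omega)) fun i hi j hj hij hpij => ?_
  rw [Set.mem_Iic] at hi hj
  have hfix : ∀ k ≤ N, ¬ humphriesGraph.Adj k i → ¬ humphriesGraph.Adj k j → t k • p = p :=
    fun k hk hki hkj => smul_eq_self_of_ncard_inter_nonuniformLocus_le_five (h.braid i j hi hj hij)
      (mem_centralizer_pair_iff.2 ⟨h.commute k i hk hi hki, h.commute k j hk hj hkj⟩)
      (closure_pair_le_iff.2 ⟨apply_mem_stabilizer hS i, apply_mem_stabilizer hS j⟩)
      (apply_mem_stabilizer hS k)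
      (h.ncard_inter_nonuniformLocus_adj_le_five hN hS hcard hi hj hij) ⟨hp, hpij⟩
  rw [humphriesGraph_adj] at hij
  by_cases h2 : i = 2 ∨ j = 2
  · exact h₅ (hfix 5 (by omega) (by rw [humphriesGraph_adj]; omega)
      (by rw [humphriesGraph_adj]; omega))
  · exact h₁ (hfix 1 (by omega) (by rw [humphriesGraph_adj]; omega)
      (by rw [humphriesGraph_adj]; omega))

omit [Finite Ω] in
lemma uniformUpTo_sixteen (h : IsArtinFamily humphriesGraph t (Set.Iic N)) (hN : 7 ≤ N) :
    UniformUpTo.{u} (t '' Set.Iic N) 16 := by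
  intro Ω _ _ S hS hcard
  refine actsUniformlyOn_of_inter_nonuniformLocus hS
    (h.actsUniformlyOn_of_subset_fixedBy_union hN
      (closure_le_stabilizer_inter_nonuniformLocus hS) fun p hp => ?_)
  by_contra! hmoved
  obtain ⟨h₁, h₅⟩ := not_or.1 hmoved
  exact h.notMem_nonuniformLocus_of_smul_ne hN hS hcard hp.1 h₁ h₅ hp.2

end IsArtinFamily

end BaseCase

section InductionStep

variable {t : ℕ → G} {N M n : ℕ} {S : Set Ω} {p : Ω} {y : G}

namespace IsArtinFamily

lemma ncard_sdiff_fixedBy_eq (h : IsArtinFamily humphriesGraph t (Set.Iic N)) (hN : 4 ≤ N)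
    (hS : closure (t '' Set.Iic N) ≤ stabilizer G S) (i j : ℕ) (hi : i ≤ N) (hj : j ≤ N) :
    (S \ fixedBy Ω (t i)).ncard = (S \ fixedBy Ω (t j)).ncard :=
  eq_of_preconnected_induce (f := fun k => (S \ fixedBy Ω (t k)).ncard)
    (humphriesGraph_induce_Iic_preconnected hN)
    (fun i hi j hj hij => (h.braid i j hi hj hij).ncard_sdiff_fixedBy_eq
      (apply_mem_stabilizer hS i hi) (apply_mem_stabilizer hS j hj)) hi hj

lemma subset_fixedBy_union_descend (h : IsArtinFamily humphriesGraph t (Set.Iic N))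
    (hS : closure (t '' Set.Iic N) ≤ stabilizer G S) {k l : ℕ} (hk : 4 < k) (hkl : k ≤ l)
    (hl : l ≤ N) (hfix : S ⊆ fixedBy Ω (t l) ∪ fixedBy Ω (t 1)) :
    S ⊆ fixedBy Ω (t k) ∪ fixedBy Ω (t 1) := by
  induction hkl using Nat.decreasingInduction with
  | self => exact hfix
  | of_succ m hml ih => exact h.subset_fixedBy_union_move hS (ih (by omega)) m

variable [Finite Ω]

lemma smul_eq_self_of_mem_inter_nonuniformLocus
    (h : IsArtinFamily humphriesGraph t (Set.Iic N)) (hN : 4 ≤ N)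
    (hT : UniformUpTo.{u} (t '' Set.Iic N) n)
    (hS : closure (t '' Set.Iic N) ≤ stabilizer G S) (hcard : S.ncard < 2 * (n + 1))
    (hy : y ∈ centralizer (t '' Set.Iic N)) (hyS : y ∈ stabilizer G S)
    (hp : p ∈ S ∩ nonuniformLocus Ω (t '' Set.Iic N)) : y • p = p := by
  have horbit := hT.lt_ncard_orbit hp.2
  have hle := Set.ncard_le_ncard (orbit_subset_of_le_stabilizer hS hp.1)
  rcases mem_stabilizer_orbit_or_two_mul_ncard_le hS (by rwa [centralizer_closure]) hyS hp.1
    with hyO | hhalf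
  · exact h.smul_eq_self_of_ncard_orbit_lt hN hT hp.2 hy hyO (hle.trans_lt hcard)
  · omega

lemma subset_fixedBy_union_of_mem_nonuniformLocus
    (h : IsArtinFamily humphriesGraph t (Set.Iic N)) (hM : 4 ≤ M) (hMN : M + 2 ≤ N)
    (hn : 3 ≤ n) (hT : UniformUpTo.{u} (t '' Set.Iic M) n)
    (hS : closure (t '' Set.Iic N) ≤ stabilizer G S) (hcard : S.ncard ≤ n + 4)
    (hp : p ∈ S ∩ nonuniformLocus Ω (t '' Set.Iic M)) :
    S ⊆ fixedBy Ω (t N) ∪ fixedBy Ω (t 1) := by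
  have hIic : Set.Iic M ⊆ Set.Iic N := Set.Iic_subset_Iic.2 (by omega)
  have hM_family : IsArtinFamily humphriesGraph t (Set.Iic M) := h.mono hIic
  have hSM : closure (t '' Set.Iic M) ≤ stabilizer G S :=
    (Subgroup.closure_mono (Set.image_mono hIic)).trans hS
  set O := orbit (closure (t '' Set.Iic M)) p
  have hO : closure (t '' Set.Iic M) ≤ stabilizer G O := le_stabilizer_orbit _ p
  have hOS : O ⊆ S ∩ nonuniformLocus Ω (t '' Set.Iic M) :=
    orbit_subset_of_le_stabilizer (closure_le_stabilizer_inter_nonuniformLocus hSM) hp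
  have hfix : O ⊆ fixedBy Ω (t N) := fun q hq =>
    hM_family.smul_eq_self_of_mem_inter_nonuniformLocus hM hT hSM (by omega)
      (h.mem_centralizer_image_Iic (by omega) le_rfl hMN) (apply_mem_stabilizer hS N) (hOS hq)
  obtain ⟨q, hqO, hq⟩ : ∃ q ∈ O, t 1 • q ≠ q := by
    by_contra! hall
    exact hp.2 (hM_family.actsUniformlyOn_of_subset_fixedBy hM hO 1 2 hall)
  have hthree : (S \ fixedBy Ω (t 1)).ncard ≤ 3 := by
    have horbit : n < O.ncard := hT.lt_ncard_orbit hp.2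
    have hsub := Set.ncard_le_ncard (Set.sdiff_subset_sdiff_right (s := S) hfix)
    have hsplit := Set.ncard_sdiff_add_ncard_of_subset (hOS.trans Set.inter_subset_left)
    rw [h.ncard_sdiff_fixedBy_eq (by omega) hS 1 N (by omega) le_rfl]
    omega
  intro r hr
  by_contra! hmoved
  obtain ⟨hNr, h1r⟩ := not_or.1 hmoved
  exact hthree.not_gt (four_le_ncard_sdiff_fixedBy (h.commute 1 N) (apply_mem_stabilizer hS 1)
    (hOS hqO).1 hq (hfix hqO) hr h1r hNr)

omit [Finite Ω] in
lemma uniformUpTo_add_four (h : IsArtinFamily humphriesGraph t (Set.Iic (M + 2))) (hM : 5 ≤ M)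
    (hn : 3 ≤ n) (hT : UniformUpTo.{u} (t '' Set.Iic M) n) :
    UniformUpTo.{u} (t '' Set.Iic (M + 2)) (n + 4) := by
  intro Ω _ _ S hS hcard
  rcases (S ∩ nonuniformLocus Ω (t '' Set.Iic M)).eq_empty_or_nonempty with hempty | ⟨p, hp⟩
  · have hunif : ActsUniformlyOn (t '' Set.Iic M) S :=
      actsUniformlyOn_of_disjoint_nonuniformLocus (Set.disjoint_iff_inter_eq_empty.2 hempty)
    have hmem : ∀ i ≤ M, t i ∈ t '' Set.Iic M := fun i hi => Set.mem_image_of_mem t hi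
    exact h.actsUniformlyOn_of_eqOn (by omega) hS 1 2
      (hunif _ (hmem 1 (by omega)) _ (hmem 2 (by omega)))
  · have hlast := h.subset_fixedBy_union_of_mem_nonuniformLocus (by omega) le_rfl hn hT hS
      hcard hp
    have h₅₁ := h.subset_fixedBy_union_descend hS (k := 5) (by omega) (by omega) le_rfl hlast
    exact h.actsUniformlyOn_of_subset_fixedBy_union (by omega) hS (by rwa [Set.union_comm])

omit [Finite Ω] in
theorem uniformUpTo_four_mul {ρ : ℕ} (hρ : 3 ≤ ρ)
    (h : IsArtinFamily humphriesGraph t (Set.Iic (2 * ρ + 1))) :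
    UniformUpTo.{u} (t '' Set.Iic (2 * ρ + 1)) (4 * ρ + 4) := by
  induction ρ, hρ using Nat.le_induction with
  | base => exact h.uniformUpTo_sixteen le_rfl
  | succ r hr ih =>
    exact h.uniformUpTo_add_four (M := 2 * r + 1) (n := 4 * r + 4) (by omega) (by omega)
      (ih (h.mono (Set.Iic_subset_Iic.2 (by omega))))

end IsArtinFamily

end InductionStep

section PerfectGroup

lemma smul_eq_self_of_actsUniformlyOn_univ [Group.IsPerfect G] {T : Set G}
    (hgen : closure T = ⊤) (h : ActsUniformlyOn T (Set.univ : Set Ω)) (g : G) (p : Ω) :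
    g • p = p := by
  have himage : (toPermHom G Ω '' T).Subsingleton := by
    rintro _ ⟨a, ha, rfl⟩ _ ⟨b, hb, rfl⟩
    exact Equiv.ext fun q => h a ha b hb (Set.mem_univ q)
  have hrange : (toPermHom G Ω).range = closure (toPermHom G Ω '' T) := by
    rw [← MonoidHom.map_closure, hgen, MonoidHom.range_eq_map]
  have : IsMulCommutative (toPermHom G Ω).range := hrange ▸
    isMulCommutative_closure fun x hx y hy => by rw [himage hx hy]
  have : Group.IsPerfect (toPermHom G Ω).range := Group.IsPerfect.range _
  have hg : (toPermHom G Ω).rangeRestrict g = (toPermHom G Ω).rangeRestrict 1 :=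
    Subsingleton.elim _ _
  simpa using congrArg (fun σ : (toPermHom G Ω).range => (σ : Equiv.Perm Ω) p) hg

end PerfectGroup

end

/-- Theorem 1 of the paper, abstracted. Let `ρ ≥ 3` be an integer.
Let `G` be a group containing elements `t 0, …, t (2ρ+1)` satisfying the
braid/commutation relations of the Humphries–Dehn twist generators of the mapping class
group, generated by `t 0, …, t (2ρ)`, and perfect. Then `G` has no proper subgroup of
finite index at most `4ρ+4`: every subgroup of finite index `≤ 4ρ+4` is all of `G`. -/
theorem mcg_no_small_index_subgroup (ρ : ℕ) (hρ : 3 ≤ ρ) (G : Type*) [Group G] (t : ℕ → G)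
    (hcomm : ∀ i j : ℕ, 1 ≤ i → i ≤ 2 * ρ + 1 → 1 ≤ j → j ≤ 2 * ρ + 1 →
      (i + 2 ≤ j ∨ j + 2 ≤ i) → t i * t j = t j * t i)
    (hbraid : ∀ i : ℕ, 1 ≤ i → i ≤ 2 * ρ →
      t i * t (i + 1) * t i = t (i + 1) * t i * t (i + 1))
    (hcomm0 : ∀ i : ℕ, 1 ≤ i → i ≤ 2 * ρ + 1 → i ≠ 4 → t 0 * t i = t i * t 0)
    (hbraid0 : t 0 * t 4 * t 0 = t 4 * t 0 * t 4)
    (hgen : Subgroup.closure (t '' {i : ℕ | i ≤ 2 * ρ}) = ⊤)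
    (hperfect : commutator G = ⊤) :
    ∀ H : Subgroup G, H.index ≠ 0 → H.index ≤ 4 * ρ + 4 → H = ⊤ := by
  intro H hindex hle
  have : Finite (G ⧸ H) := Subgroup.finiteIndex_iff_finite_quotient.1 ⟨hindex⟩
  have : Group.IsPerfect G := ⟨hperfect⟩
  have hfamily : IsArtinFamily humphriesGraph t (Set.Iic (2 * ρ + 1)) :=
    isArtinFamily_humphriesGraph
      (fun i j hi hj hij => hcomm i j hi (by omega) (by omega) hj (Or.inl hij))
      (fun i hi hiρ => hbraid i hi (by omega)) hcomm0 hbraid0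
  have hgen' : Subgroup.closure (t '' Set.Iic (2 * ρ + 1)) = ⊤ :=
    top_le_iff.1 (hgen.ge.trans (Subgroup.closure_mono
      (Set.image_mono fun i hi => Nat.le_succ_of_le hi)))
  have hunif : ActsUniformlyOn (t '' Set.Iic (2 * ρ + 1)) (Set.univ : Set (G ⧸ H)) :=
    hfamily.uniformUpTo_four_mul hρ (G ⧸ H) Set.univ (by simp) (by rwa [Set.ncard_univ])
  rw [← MulAction.stabilizer_quotient H, eq_top_iff]
  exact fun g _ => smul_eq_self_of_actsUniformlyOn_univ hgen' hunif g _
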